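/- Let G be a finite abelian group with |G| ≥ 3 satisfying Property P. Then there exists A* ∈ B(G) such that for all A ∈ B(G) with ρ(L(A)) = D(G)/2, the length set L(A*A) is a discrete interval with ρ(L(A*A)) = D(G)/2. -/

import Mathlib

def IsMinZS {G : Type*} [AddCommGroup G] (U : Multiset G) : Prop :=
  U ≠ 0 ∧ U.sum = 0 ∧ ∀ V ≤ U, V ≠ 0 → V.sum = 0 → V = U

noncomputable def DavC (G : Type*) [AddCommGroup G] : ℕ :=
  sSup {n | ∃ U : Multiset G, IsMinZS U ∧ U.card = n}

def LSet {G : Type*} [AddCommGroup G] (A : Multiset G) : Set ℕ :=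
  {k | ∃ l : Multiset (Multiset G), l.card = k ∧ (∀ U ∈ l, IsMinZS U) ∧ l.sum = A}

noncomputable def rhoSet (L : Set ℕ) : ℚ := ((sSup L : ℕ) : ℚ) / ((sInf L : ℕ) : ℚ)

def IsIntervalSet (L : Set ℕ) : Prop := L.Nonempty ∧ L = Set.Icc (sInf L) (sSup L)

def PropertyP (G : Type*) [AddCommGroup G] : Prop :=
  ∃ (g₁ g₂ : G) (U₁ U₂ : Multiset G),
    IsMinZS U₁ ∧ IsMinZS U₂ ∧ U₁.card = DavC G ∧ U₂.card = DavC G ∧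
    ({g₁, g₂} : Multiset G) ≤ U₁ ∧ (g₁ + g₂) ∈ U₂

/-!
A sequence `A` attains the elasticity `D / 2` only if `A = E(-E)` with `0 ∉ E` and `2|E| = D m` for
some `m ∈ L(A)`: the longest factorization then consists of pairs `g(-g)` and the shortest of
minimal zero-sum sequences of length `D`.  Deleting a pair `g(-g)` from such an `A` and factorizing
anew the at most two factors it meets costs fewer than `2D` factors, so by induction on `E` the gaps
of `L(A)` have length at most `2D`.  Property P provides a sequence `F = U₁U₂` with
`4, 5, 2D - 1, 2D ∈ L(F(-F))`, so that the lengths of `A* = (F(-F)) ^ (2D)` fill the whole interval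
`[8D, 4D²]`.  This interval is longer than `2D`, and adding it to `L(A)` closes all the gaps.
-/

section Cover

variable {α : Type*}

theorem exists_le_card_le_of_le_sum {P : Multiset α} {l : Multiset (Multiset α)} (h : P ≤ l.sum) :
    ∃ l₁ ≤ l, l₁.card ≤ P.card ∧ P ≤ l₁.sum := by
  induction P using Multiset.induction with
  | empty => exact ⟨0, by simp⟩
  | cons g P ih =>
    obtain ⟨l₁, hl₁, hcard, hP⟩ := ih ((Multiset.le_cons_self _ _).trans h)
    obtain ⟨l₂, rfl⟩ := Multiset.le_iff_exists_add.mp hl₁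
    obtain ⟨R, hR⟩ := Multiset.le_iff_exists_add.mp hP
    have hg : g ∈ R + l₂.sum := by
      rw [Multiset.sum_add, hR, add_assoc, ← Multiset.singleton_add, add_comm _ P] at h
      exact Multiset.singleton_le.mp (le_of_add_le_add_left h)
    rcases Multiset.mem_add.mp hg with hgR | hgl₂
    · refine ⟨l₁, hl₁, hcard.trans (Multiset.card_le_card (Multiset.le_cons_self _ _)), ?_⟩
      rw [hR, ← Multiset.singleton_add, add_comm _ P]
      exact add_le_add_right (Multiset.singleton_le.mpr hgR) P
    · obtain ⟨V, hV, hgV⟩ := Multiset.mem_join.mp hgl₂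
      refine ⟨V ::ₘ l₁, ?_, by simpa using hcard, ?_⟩
      · rw [← Multiset.singleton_add, add_comm _ l₁]
        exact add_le_add_right (Multiset.singleton_le.mpr hV) l₁
      · rw [Multiset.sum_cons, ← Multiset.singleton_add]
        exact add_le_add (Multiset.singleton_le.mpr hgV) hP

theorem mul_card_le_map_sum (f : Multiset α →+ ℕ) {c : ℕ} {l : Multiset (Multiset α)}
    (h : ∀ U ∈ l, c ≤ f U) : c * l.card ≤ f l.sum := by
  rw [map_multiset_sum, mul_comm, ← smul_eq_mul, ← Multiset.card_map f l]
  exact Multiset.card_nsmul_le_sum (by simpa using h)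

theorem map_sum_le_mul_card (f : Multiset α →+ ℕ) {c : ℕ} {l : Multiset (Multiset α)}
    (h : ∀ U ∈ l, f U ≤ c) : f l.sum ≤ c * l.card := by
  rw [map_multiset_sum, mul_comm, ← smul_eq_mul, ← Multiset.card_map f l]
  exact Multiset.sum_le_card_nsmul _ _ (by simpa using h)

end Cover

section MinimalZeroSum

variable {G : Type*} [AddCommGroup G] {U S T : Multiset G} {g g₁ g₂ : G}

theorem two_le_card_of_sum_eq_zero (hne : U ≠ 0) (h0 : (0 : G) ∉ U) (hs : U.sum = 0) :
    2 ≤ U.card := by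
  by_contra! hlt
  have hpos : 0 < U.card := Multiset.card_pos.mpr hne
  obtain ⟨x, rfl⟩ := Multiset.card_eq_one.mp (show U.card = 1 by omega)
  rw [Multiset.sum_singleton] at hs
  exact h0 (by simp [hs])

theorem isMinZS_of_card_le_three (hne : U ≠ 0) (h0 : (0 : G) ∉ U) (hs : U.sum = 0)
    (hcard : U.card ≤ 3) : IsMinZS U := by
  refine ⟨hne, hs, fun V hV hVne hVs => ?_⟩
  obtain ⟨W, rfl⟩ := Multiset.le_iff_exists_add.mp hV
  rw [Multiset.sum_add, hVs, zero_add] at hs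
  rw [Multiset.mem_add, not_or] at h0
  rw [Multiset.card_add] at hcard
  have hV2 := two_le_card_of_sum_eq_zero hVne h0.1 hVs
  have hW : W = 0 := by
    by_contra hWne
    have hW2 := two_le_card_of_sum_eq_zero hWne h0.2 hs
    omega
  rw [hW, add_zero]

theorem isMinZS_pair_neg (hg : g ≠ 0) : IsMinZS {g, -g} :=
  isMinZS_of_card_le_three (by simp) (by simp [hg, hg.symm]) (by simp) (by simp)

theorem isMinZS_triple_neg_add (h₁ : g₁ ≠ 0) (h₂ : g₂ ≠ 0) (h : g₁ + g₂ ≠ 0) :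
    IsMinZS {g₁, g₂, -(g₁ + g₂)} := by
  have h0 : (0 : G) ∉ ({g₁, g₂, -(g₁ + g₂)} : Multiset G) := by
    simpa only [Multiset.insert_eq_cons, Multiset.mem_cons, Multiset.mem_singleton, not_or] using
      ⟨h₁.symm, h₂.symm, (neg_ne_zero.mpr h).symm⟩
  refine isMinZS_of_card_le_three (by simp) h0 ?_ (by simp)
  simp only [Multiset.insert_eq_cons, Multiset.sum_cons, Multiset.sum_singleton]
  abel

namespace IsMinZS

theorem eq_singleton_zero (hU : IsMinZS U) (h0 : (0 : G) ∈ U) : U = {0} :=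
  (hU.2.2 {0} (Multiset.singleton_le.mpr h0) (by simp) (by simp)).symm

theorem zero_notMem (hU : IsMinZS U) (hcard : 2 ≤ U.card) : (0 : G) ∉ U := by
  intro h0
  rw [hU.eq_singleton_zero h0, Multiset.card_singleton] at hcard
  omega

theorem card_pos (hU : IsMinZS U) : 0 < U.card :=
  Multiset.card_pos.mpr hU.1

theorem map_neg (hU : IsMinZS U) : IsMinZS (U.map Neg.neg) := by
  refine ⟨by simpa using hU.1, by rw [Multiset.sum_map_neg', hU.2.1, neg_zero], ?_⟩
  intro V hV hne hs
  have hneg : V.map Neg.neg ≤ U := by simpa using Multiset.map_le_map (f := Neg.neg) hV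
  rw [← hU.2.2 _ hneg (by simpa using hne) (by rw [Multiset.sum_map_neg', hs, neg_zero])]
  simp

theorem eq_zero_of_le_tail (hU : IsMinZS (g ::ₘ T)) {V : Multiset G} (hV : V ≤ T)
    (hs : V.sum = 0) : V = 0 := by
  by_contra hne
  have hcard := Multiset.card_le_card hV
  rw [hU.2.2 V (hV.trans (Multiset.le_cons_self _ _)) hne hs, Multiset.card_cons] at hcard
  omega

theorem add_cons (hU : IsMinZS (g₁ ::ₘ g₂ ::ₘ S)) : IsMinZS ((g₁ + g₂) ::ₘ S) := by
  refine ⟨by simp, by simpa [add_assoc] using hU.2.1, fun V hV hne hs => ?_⟩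
  by_cases hmem : g₁ + g₂ ∈ V
  · obtain ⟨V, rfl⟩ := Multiset.exists_cons_of_mem hmem
    have hVS : V ≤ S := (Multiset.cons_le_cons_iff _).mp hV
    have heq := hU.2.2 (g₁ ::ₘ g₂ ::ₘ V) (by simpa using hVS) (by simp)
      (by simpa [add_assoc] using hs)
    simpa using heq
  · have hVS : V ≤ S := (Multiset.le_cons_of_notMem hmem).mp hV
    exact absurd (hU.eq_zero_of_le_tail (hVS.trans (Multiset.le_cons_self _ _)) hs) hne

end IsMinZS

end MinimalZeroSum

section Davenport

variable {G : Type*} [AddCommGroup G]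

theorem exists_le_sum_eq_zero_of_card_le [Finite G] {T : Multiset G} (h : Nat.card G ≤ T.card) :
    ∃ V ≤ T, V ≠ 0 ∧ V.sum = 0 := by
  have := Fintype.ofFinite G
  induction T using Quotient.inductionOn with
  | h l =>
  rw [Nat.card_eq_fintype_card] at h
  obtain ⟨i, j, hne, heq⟩ := Fintype.exists_ne_map_eq_of_card_lt
    (fun i : Fin (l.length + 1) => (l.take i).sum) (by simpa using Nat.lt_succ_of_le h)
  wlog hij : i < j generalizing i j
  · exact this j i hne.symm heq.symm (hne.lt_or_gt.resolve_left hij)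
  have hij' : (i : ℕ) < j := hij
  refine ⟨((l.take j).drop i : List G), ?_, ?_, ?_⟩
  · exact ((List.drop_sublist _ _).trans (List.take_sublist _ _)).subperm
  · rw [Ne, Multiset.coe_eq_zero, List.drop_eq_nil_iff, List.length_take,
      min_eq_left (Nat.le_of_lt_succ j.2)]
    exact hij'.not_ge
  · have hsplit := List.sum_take_add_sum_drop (l.take j) i
    rw [List.take_take, min_eq_left hij'.le, ← heq] at hsplit
    simpa using hsplit

namespace IsMinZS

theorem card_le_natCard [Finite G] {U : Multiset G} (hU : IsMinZS U) : U.card ≤ Nat.card G := by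
  by_contra! hlt
  obtain ⟨g, hg⟩ := Multiset.exists_mem_of_ne_zero hU.1
  obtain ⟨T, rfl⟩ := Multiset.exists_cons_of_mem hg
  rw [Multiset.card_cons] at hlt
  obtain ⟨V, hVT, hV, hs⟩ := exists_le_sum_eq_zero_of_card_le (Nat.le_of_lt_succ hlt)
  exact hV (hU.eq_zero_of_le_tail hVT hs)

theorem card_le_davC [Finite G] {U : Multiset G} (hU : IsMinZS U) : U.card ≤ DavC G := by
  refine le_csSup ⟨Nat.card G, ?_⟩ ⟨U, hU, rfl⟩
  rintro _ ⟨V, hV, rfl⟩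
  exact hV.card_le_natCard

theorem two_le_card_add_count_zero [DecidableEq G] {U : Multiset G} (hU : IsMinZS U) :
    2 ≤ U.card + U.count 0 := by
  by_cases h0 : (0 : G) ∈ U
  · simp [hU.eq_singleton_zero h0]
  · exact (two_le_card_of_sum_eq_zero hU.1 h0 hU.2.1).trans (Nat.le_add_right _ _)

theorem card_add_count_zero_le_davC [Finite G] [DecidableEq G] {U : Multiset G}
    (hU : IsMinZS U) : U.card + (DavC G - 1) * U.count 0 ≤ DavC G := by
  have hcard := hU.card_le_davC
  by_cases h0 : (0 : G) ∈ U
  · rw [hU.eq_singleton_zero h0, Multiset.card_singleton] at hcard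
    rw [hU.eq_singleton_zero h0, Multiset.card_singleton, Multiset.count_singleton_self]
    omega
  · simpa [Multiset.count_eq_zero_of_notMem h0] using hcard

end IsMinZS

theorem PropertyP.three_le_davC (hP : PropertyP G) : 3 ≤ DavC G := by
  obtain ⟨g₁, g₂, U₁, U₂, hU₁, hU₂, hcard₁, hcard₂, hle, hmem⟩ := hP
  have hD : 2 ≤ DavC G := by simpa [hcard₁] using Multiset.card_le_card hle
  by_contra! hlt
  have hU₁_eq : {g₁, g₂} = U₁ := Multiset.eq_of_le_of_card_le hle (by
    rw [hcard₁, Multiset.card_pair]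
    omega)
  have hsum : g₁ + g₂ = 0 := by simpa [← hU₁_eq] using hU₁.2.1
  exact hU₂.zero_notMem (by omega) (hsum ▸ hmem)

end Davenport

section Factorization

variable {G : Type*} [AddCommGroup G] {A B : Multiset G}

theorem sum_sum_eq_zero {l : Multiset (Multiset G)} (hl : ∀ U ∈ l, IsMinZS U) :
    l.sum.sum = 0 := by
  rw [← Multiset.coe_sumAddMonoidHom, map_multiset_sum]
  refine Multiset.sum_eq_zero fun x hx => ?_
  obtain ⟨U, hU, rfl⟩ := Multiset.mem_map.mp hx
  exact (hl U hU).2.1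

theorem card_le_card_sum {l : Multiset (Multiset G)} (hl : ∀ U ∈ l, IsMinZS U) :
    l.card ≤ l.sum.card := by
  simpa using mul_card_le_map_sum Multiset.cardHom (c := 1) fun U hU => (hl U hU).card_pos

theorem zero_mem_lSet_zero : 0 ∈ LSet (0 : Multiset G) :=
  ⟨0, by simp⟩

theorem IsMinZS.one_mem_lSet (hA : IsMinZS A) : 1 ∈ LSet A :=
  ⟨{A}, by simpa using hA⟩

theorem add_mem_lSet_add {a b : ℕ} (ha : a ∈ LSet A) (hb : b ∈ LSet B) : a + b ∈ LSet (A + B) := by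
  obtain ⟨l₁, rfl, hl₁, rfl⟩ := ha
  obtain ⟨l₂, rfl, hl₂, rfl⟩ := hb
  refine ⟨l₁ + l₂, by simp, fun U hU => ?_, by simp⟩
  exact (Multiset.mem_add.mp hU).elim (hl₁ U) (hl₂ U)

theorem mul_mem_lSet_nsmul {a : ℕ} (ha : a ∈ LSet A) (k : ℕ) : k * a ∈ LSet (k • A) := by
  induction k with
  | zero => simpa using zero_mem_lSet_zero
  | succ k ih => simpa only [Nat.succ_mul, succ_nsmul] using add_mem_lSet_add ih ha

theorem lSet_nonempty (hA : A.sum = 0) : (LSet A).Nonempty := by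
  induction A using Multiset.strongInductionOn with
  | ih A ih =>
  by_cases h0 : A = 0
  · exact ⟨0, h0 ▸ zero_mem_lSet_zero⟩
  by_cases hmin : IsMinZS A
  · exact ⟨1, hmin.one_mem_lSet⟩
  obtain ⟨V, hVA, hV, hs, hne⟩ : ∃ V ≤ A, V ≠ 0 ∧ V.sum = 0 ∧ V ≠ A := by
    by_contra! hcon
    exact hmin ⟨h0, hA, hcon⟩
  obtain ⟨W, rfl⟩ := Multiset.le_iff_exists_add.mp hVA
  obtain ⟨a, ha⟩ := ih V (lt_of_le_of_ne hVA hne) hs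
  obtain ⟨b, hb⟩ := ih W (lt_add_of_pos_left W (pos_iff_ne_zero.mpr hV)) (by simpa [hs] using hA)
  exact ⟨a + b, add_mem_lSet_add ha hb⟩

theorem bddAbove_lSet (A : Multiset G) : BddAbove (LSet A) := by
  refine ⟨A.card, ?_⟩
  rintro _ ⟨l, rfl, hl, rfl⟩
  exact card_le_card_sum hl

theorem two_mul_le_of_mem_lSet [DecidableEq G] {k : ℕ} (hk : k ∈ LSet A) :
    2 * k ≤ A.card + A.count 0 := by
  obtain ⟨l, rfl, hl, rfl⟩ := hk
  exact mul_card_le_map_sum (Multiset.cardHom + Multiset.countAddMonoidHom 0)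
    fun U hU => (hl U hU).two_le_card_add_count_zero

theorem card_add_count_zero_le_of_mem_lSet [Finite G] [DecidableEq G] {k : ℕ}
    (hk : k ∈ LSet A) : A.card + (DavC G - 1) * A.count 0 ≤ DavC G * k := by
  obtain ⟨l, rfl, hl, rfl⟩ := hk
  exact map_sum_le_mul_card (Multiset.cardHom + (DavC G - 1) • Multiset.countAddMonoidHom 0)
    fun U hU => (hl U hU).card_add_count_zero_le_davC

/-- At most `|A|` factors cover `A`; what they leave of their product is factorized anew. -/
theorem exists_mem_lSet_of_mem_lSet_add [Finite G] (hA : A.sum = 0) {k : ℕ}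
    (hk : k ∈ LSet (A + B)) : ∃ m ∈ LSet B, m + A.card ≤ k + A.card * DavC G := by
  obtain ⟨l, rfl, hl, hsum⟩ := hk
  obtain ⟨l₁, hl₁, hcard, hle⟩ := exists_le_card_le_of_le_sum (P := A) (l := l) (by simp [hsum])
  obtain ⟨l₂, rfl⟩ := Multiset.le_iff_exists_add.mp hl₁
  obtain ⟨R, hR⟩ := Multiset.le_iff_exists_add.mp hle
  have hl₁min : ∀ U ∈ l₁, IsMinZS U := fun U hU => hl U (Multiset.mem_add.mpr (.inl hU))
  have hl₂min : ∀ U ∈ l₂, IsMinZS U := fun U hU => hl U (Multiset.mem_add.mpr (.inr hU))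
  have hRB : R + l₂.sum = B := by
    rwa [Multiset.sum_add, hR, add_assoc, add_right_inj] at hsum
  have hRsum : R.sum = 0 := by
    simpa [hR, hA] using sum_sum_eq_zero hl₁min
  obtain ⟨_, q, rfl, hq, hqR⟩ := lSet_nonempty hRsum
  refine ⟨_, hRB ▸ add_mem_lSet_add ⟨q, rfl, hq, hqR⟩ ⟨l₂, rfl, hl₂min, rfl⟩, ?_⟩
  have hqcard : q.card ≤ R.card := hqR ▸ card_le_card_sum hq
  have hcover : A.card + R.card ≤ A.card * DavC G :=
    calc A.card + R.card = l₁.sum.card := by rw [hR, Multiset.card_add]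
      _ ≤ DavC G * l₁.card :=
        map_sum_le_mul_card Multiset.cardHom fun U hU => (hl₁min U hU).card_le_davC
      _ ≤ A.card * DavC G := by rw [mul_comm]; gcongr
  rw [Multiset.card_add]
  omega

theorem two_mem_lSet_cons_cons {g₁ g₂ : G} {T : Multiset G} (hT : IsMinZS ((g₁ + g₂) ::ₘ T))
    (hsplit : ¬ IsMinZS (g₁ ::ₘ g₂ ::ₘ T)) : 2 ∈ LSet (g₁ ::ₘ g₂ ::ₘ T) := by
  obtain ⟨_, l, rfl, hl, hsum⟩ := lSet_nonempty (A := g₁ ::ₘ g₂ ::ₘ T)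
    (by simpa [add_assoc] using hT.2.1)
  have hle_two : l.card ≤ 2 := by
    obtain ⟨l₁, hl₁, hcard, hle⟩ := exists_le_card_le_of_le_sum (P := {g₁, g₂}) (l := l)
      (by simp [hsum, Multiset.insert_eq_cons])
    obtain ⟨l₂, rfl⟩ := Multiset.le_iff_exists_add.mp hl₁
    have hl₂min : ∀ U ∈ l₂, IsMinZS U := fun U hU => hl U (Multiset.mem_add.mpr (.inr hU))
    have hl₂T : l₂.sum ≤ T := by
      have hadd : {g₁, g₂} + l₂.sum ≤ g₁ ::ₘ g₂ ::ₘ T := by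
        rw [← hsum, Multiset.sum_add]
        gcongr
      simpa [Multiset.insert_eq_cons] using hadd
    have hl₂ : l₂.card ≤ 0 := by
      simpa [hT.eq_zero_of_le_tail hl₂T (sum_sum_eq_zero hl₂min)] using card_le_card_sum hl₂min
    rw [Multiset.card_add]
    simp only [Multiset.insert_eq_cons, Multiset.card_cons, Multiset.card_singleton] at hcard
    omega
  have hne_zero : l.card ≠ 0 := by
    intro h
    simp [Multiset.card_eq_zero.mp h] at hsum
  have hne_one : l.card ≠ 1 := by
    intro h
    obtain ⟨U, rfl⟩ := Multiset.card_eq_one.mp h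
    rw [Multiset.sum_singleton] at hsum
    exact hsplit (hsum ▸ hl U (Multiset.mem_singleton_self U))
  exact ⟨l, by omega, hl, hsum⟩

end Factorization

section Interval

variable {G : Type*} [AddCommGroup G] {A : Multiset G}

theorem Icc_subset_lSet_nsmul_of_succ {a : ℕ} (ha : a ∈ LSet A) (ha' : a + 1 ∈ LSet A) (k : ℕ) :
    Set.Icc (k * a) (k * (a + 1)) ⊆ LSet (k • A) := by
  rintro n ⟨hn, hn'⟩
  obtain ⟨j, rfl⟩ := Nat.exists_eq_add_of_le hn
  obtain ⟨i, rfl⟩ : ∃ i, k = j + i := Nat.exists_eq_add_of_le (by linarith)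
  rw [add_nsmul]
  convert add_mem_lSet_add (mul_mem_lSet_nsmul ha' j) (mul_mem_lSet_nsmul ha i) using 1
  ring

theorem exists_add_eq_mem_Icc_mul_add_mul {a b k n : ℕ} (hab : a ≤ b) (hk : b ≤ a + k + 1)
    (hn : n ∈ Set.Icc (k * a) (k * (b + 1))) :
    ∃ i j, i + j = k ∧ n ∈ Set.Icc (i * a + j * b) (i * (a + 1) + j * (b + 1)) := by
  obtain ⟨d, rfl⟩ := Nat.exists_eq_add_of_le hab
  obtain ⟨r, rfl⟩ := Nat.exists_eq_add_of_le hn.1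
  have hr : r ≤ k * (d + 1) := by linarith [hn.2]
  have hdiv := Nat.div_mul_le_self r d
  rcases Nat.lt_or_ge (r / d) k with hlt | hge
  · have hr' : r ≤ r / d * d + k := by
      rcases Nat.eq_zero_or_pos d with rfl | hd
      · simpa using hr
      · have hmod := Nat.div_add_mod' r d
        have hmod_lt := Nat.mod_lt r hd
        omega
    obtain ⟨i, hi⟩ := Nat.exists_eq_add_of_le' hlt.le
    refine ⟨i, r / d, hi.symm, ?_, ?_⟩ <;> (generalize r / d = j at *; subst hi; linarith)
  · exact ⟨0, k, zero_add k, by nlinarith, by linarith⟩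

open scoped Pointwise in
theorem Icc_subset_lSet_nsmul {a b k : ℕ} (ha : a ∈ LSet A) (ha' : a + 1 ∈ LSet A)
    (hb : b ∈ LSet A) (hb' : b + 1 ∈ LSet A) (hab : a ≤ b) (hk : b ≤ a + k + 1) :
    Set.Icc (k * a) (k * (b + 1)) ⊆ LSet (k • A) := by
  intro n hn
  obtain ⟨i, j, rfl, hlo, hhi⟩ := exists_add_eq_mem_Icc_mul_add_mul hab hk hn
  obtain ⟨x, hx, y, hy, rfl⟩ :
      n ∈ Set.Icc (i * a) (i * (a + 1)) + Set.Icc (j * b) (j * (b + 1)) := by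
    rw [Set.Icc_add_Icc (by gcongr; omega) (by gcongr; omega)]
    exact ⟨hlo, hhi⟩
  rw [add_nsmul]
  exact add_mem_lSet_add (Icc_subset_lSet_nsmul_of_succ ha ha' i hx)
    (Icc_subset_lSet_nsmul_of_succ hb hb' j hy)

theorem isIntervalSet_Icc {a b : ℕ} (h : a ≤ b) : IsIntervalSet (Set.Icc a b) :=
  ⟨Set.nonempty_Icc.mpr h, by rw [csInf_Icc h, csSup_Icc h]⟩

theorem rhoSet_Icc {a b : ℕ} (h : a ≤ b) : rhoSet (Set.Icc a b) = b / a := by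
  rw [rhoSet, csInf_Icc h, csSup_Icc h]

end Interval

section Symmetrize

variable {G : Type*} [AddCommGroup G] {E : Multiset G} {U : Multiset G}

/-- The sequence `E(-E)`, as a homomorphism in `E`.  The zero-sum sequences attaining the elasticity
of `B(G)` are all of this form. -/
def symmetrize : Multiset G →+ Multiset G :=
  AddMonoidHom.id _ + Multiset.mapAddMonoidHom Neg.neg

theorem symmetrize_apply (E : Multiset G) : symmetrize E = E + E.map Neg.neg :=
  rfl

theorem symmetrize_singleton (g : G) : symmetrize {g} = {g, -g} :=
  rfl

theorem symmetrize_cons (g : G) (E : Multiset G) :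
    symmetrize (g ::ₘ E) = {g, -g} + symmetrize E := by
  rw [← Multiset.singleton_add, map_add, symmetrize_singleton]

theorem card_symmetrize (E : Multiset G) : (symmetrize E).card = 2 * E.card := by
  rw [symmetrize_apply, Multiset.card_add, Multiset.card_map, two_mul]

theorem sum_symmetrize (E : Multiset G) : (symmetrize E).sum = 0 := by
  rw [symmetrize_apply, Multiset.sum_add, Multiset.sum_map_neg', add_neg_cancel]

theorem zero_mem_symmetrize : (0 : G) ∈ symmetrize E ↔ (0 : G) ∈ E := by
  simp [symmetrize_apply]

theorem IsMinZS.two_mem_lSet_symmetrize (hU : IsMinZS U) : 2 ∈ LSet (symmetrize U) :=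
  add_mem_lSet_add hU.one_mem_lSet hU.map_neg.one_mem_lSet

theorem card_mem_lSet_symmetrize (h0 : (0 : G) ∉ E) : E.card ∈ LSet (symmetrize E) := by
  induction E using Multiset.induction with
  | empty => exact zero_mem_lSet_zero
  | cons g E ih =>
    rw [Multiset.mem_cons, not_or] at h0
    rw [symmetrize_cons, Multiset.card_cons, add_comm E.card]
    exact add_mem_lSet_add (isMinZS_pair_neg (Ne.symm h0.1)).one_mem_lSet (ih h0.2)

theorem lSet_symmetrize_subset_Icc [Finite G] (h0 : (0 : G) ∉ E) (hD : 0 < DavC G) {m : ℕ}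
    (hm : 2 * E.card = DavC G * m) : LSet (symmetrize E) ⊆ Set.Icc m E.card := by
  classical
  intro k hk
  have hcount : (symmetrize E).count 0 = 0 :=
    Multiset.count_eq_zero.mpr (mt zero_mem_symmetrize.mp h0)
  have hupper := two_mul_le_of_mem_lSet hk
  have hlower := card_add_count_zero_le_of_mem_lSet hk
  rw [hcount, card_symmetrize] at hupper hlower
  exact ⟨Nat.le_of_mul_le_mul_left (by omega) hD, by omega⟩

theorem exists_mem_lSet_symmetrize_near [Finite G] (h0 : (0 : G) ∉ E) {m n : ℕ}
    (hm : m ∈ LSet (symmetrize E)) (hmn : m ≤ n) (hn : n ≤ E.card) :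
    ∃ k ∈ LSet (symmetrize E), k ≤ n ∧ n ≤ k + 2 * DavC G := by
  induction E using Multiset.induction generalizing m n with
  | empty => exact ⟨m, hm, hmn, hn.trans (Nat.zero_le _)⟩
  | cons g E ih =>
    rcases Nat.lt_or_ge (m + 2 * DavC G) n with hfar | hnear
    · rw [Multiset.mem_cons, not_or] at h0
      rw [Multiset.card_cons] at hn
      rw [symmetrize_cons] at hm ⊢
      obtain ⟨m', hm', hle⟩ := exists_mem_lSet_of_mem_lSet_add (by simp) hm
      rw [Multiset.card_pair] at hle
      obtain ⟨k, hk, hkn, hnk⟩ := ih h0.2 hm' (n := n - 1) (by omega) (by omega)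
      have hpair := (isMinZS_pair_neg (Ne.symm h0.1)).one_mem_lSet
      exact ⟨1 + k, add_mem_lSet_add hpair hk, by omega, by omega⟩
    · exact ⟨m, hm, hmn, hnear⟩

theorem Icc_subset_lSet_add_symmetrize [Finite G] {B : Multiset G} {a b m : ℕ}
    (hB : Set.Icc a b ⊆ LSet B) (hab : a + 2 * DavC G ≤ b) (h0 : (0 : G) ∉ E)
    (hm : m ∈ LSet (symmetrize E)) :
    Set.Icc (a + m) (b + E.card) ⊆ LSet (B + symmetrize E) := by
  rintro n ⟨hlo, hhi⟩
  obtain ⟨k, hk, hak, hkb⟩ : ∃ k ∈ LSet (symmetrize E), a + k ≤ n ∧ n ≤ b + k := by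
    rcases Nat.lt_or_ge (a + E.card) n with hlarge | hsmall
    · exact ⟨E.card, card_mem_lSet_symmetrize h0, hlarge.le, hhi⟩
    · obtain ⟨k, hk, hkn, hnk⟩ :=
        exists_mem_lSet_symmetrize_near h0 hm (n := n - a) (by omega) (by omega)
      exact ⟨k, hk, by omega, by omega⟩
  have hnk : n - k ∈ Set.Icc a b := ⟨by omega, by omega⟩
  simpa [show n - k + k = n by omega] using add_mem_lSet_add (hB hnk) hk

end Symmetrize

section Extremal

variable {G : Type*} [AddCommGroup G]

theorem exists_sum_eq_symmetrize_of_card_eq_two {l : Multiset (Multiset G)}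
    (hl : ∀ U ∈ l, U.card = 2 ∧ U.sum = 0) : ∃ E, l.sum = symmetrize E := by
  induction l using Multiset.induction with
  | empty => exact ⟨0, rfl⟩
  | cons U l ih =>
    obtain ⟨E, hE⟩ := ih fun V hV => hl V (Multiset.mem_cons_of_mem hV)
    obtain ⟨hcard, hsum⟩ := hl U (Multiset.mem_cons_self U l)
    obtain ⟨x, y, rfl⟩ := Multiset.card_eq_two.mp hcard
    obtain rfl : y = -x := eq_neg_of_add_eq_zero_right (by simpa using hsum)
    exact ⟨x ::ₘ E, by rw [Multiset.sum_cons, hE, symmetrize_cons]⟩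

theorem exists_eq_symmetrize_of_card_le {A : Multiset G} {k : ℕ} (h0 : (0 : G) ∉ A)
    (hk : k ∈ LSet A) (hcard : A.card ≤ 2 * k) : ∃ E, A = symmetrize E := by
  classical
  obtain ⟨l, rfl, hl, rfl⟩ := hk
  refine exists_sum_eq_symmetrize_of_card_eq_two fun U hU => ⟨?_, (hl U hU).2.1⟩
  obtain ⟨q, rfl⟩ := Multiset.exists_cons_of_mem hU
  rw [Multiset.sum_cons, Multiset.mem_add, not_or] at h0
  have hU2 := two_le_card_of_sum_eq_zero (hl U hU).1 h0.1 (hl U hU).2.1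
  have hq := two_mul_le_of_mem_lSet ⟨q, rfl, fun V hV => hl V (Multiset.mem_cons_of_mem hV), rfl⟩
  rw [Multiset.count_eq_zero_of_notMem h0.2] at hq
  rw [Multiset.sum_cons, Multiset.card_add, Multiset.card_cons] at hcard
  omega

theorem exists_mem_lSet_of_rhoSet_eq {A : Multiset G} (hD : 0 < DavC G)
    (hρ : rhoSet (LSet A) = (DavC G : ℚ) / 2) :
    ∃ m ∈ LSet A, ∃ M ∈ LSet A, 2 * M = DavC G * m := by
  have hD' : (DavC G : ℚ) ≠ 0 := Nat.cast_ne_zero.mpr (by omega)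
  -- `x / 0 = 0`, so the elasticity of an empty `LSet A`, or of one containing `0`, is `0`.
  have hm : ((sInf (LSet A) : ℕ) : ℚ) ≠ 0 := by
    intro hzero
    rw [rhoSet, hzero, div_zero] at hρ
    exact div_ne_zero hD' two_ne_zero hρ.symm
  have hne : (LSet A).Nonempty :=
    Nat.nonempty_of_pos_sInf (Nat.pos_of_ne_zero (by exact_mod_cast hm))
  refine ⟨_, Nat.sInf_mem hne, _, Nat.sSup_mem hne (bddAbove_lSet A), ?_⟩
  rw [rhoSet, div_eq_div_iff hm two_ne_zero, mul_comm] at hρ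
  exact_mod_cast hρ

theorem exists_eq_symmetrize_of_rhoSet_eq [Finite G] {A : Multiset G} (hD : 3 ≤ DavC G)
    (hρ : rhoSet (LSet A) = (DavC G : ℚ) / 2) :
    ∃ E, A = symmetrize E ∧ (0 : G) ∉ E ∧ ∃ m ∈ LSet A, 2 * E.card = DavC G * m := by
  classical
  obtain ⟨m, hm, M, hM, hmM⟩ := exists_mem_lSet_of_rhoSet_eq (by omega) hρ
  have hupper := two_mul_le_of_mem_lSet hM
  have hlower := card_add_count_zero_le_of_mem_lSet hm
  have hcount : A.count 0 = 0 := by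
    have hmul : 2 * A.count 0 ≤ (DavC G - 1) * A.count 0 := Nat.mul_le_mul_right _ (by omega)
    omega
  rw [hcount] at hupper hlower
  have h0 : (0 : G) ∉ A := Multiset.count_eq_zero.mp hcount
  obtain ⟨E, rfl⟩ := exists_eq_symmetrize_of_card_le h0 hM (by omega)
  refine ⟨E, rfl, mt zero_mem_symmetrize.mpr h0, m, hm, ?_⟩
  rw [card_symmetrize] at hupper hlower
  omega

end Extremal

section PropertyP

variable {G : Type*} [AddCommGroup G] {g₁ g₂ : G} {S T : Multiset G}

theorem four_mem_lSet_symmetrize_add {U₁ U₂ : Multiset G} (h₁ : IsMinZS U₁) (h₂ : IsMinZS U₂) :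
    4 ∈ LSet (symmetrize (U₁ + U₂)) := by
  rw [map_add]
  exact add_mem_lSet_add h₁.two_mem_lSet_symmetrize h₂.two_mem_lSet_symmetrize

/-- Exchanging `g₁g₂` and `g₁ + g₂` turns `U₁U₂` into a product of three minimal zero-sum
sequences. -/
theorem five_mem_lSet_symmetrize_add (h₁ : IsMinZS (g₁ ::ₘ g₂ ::ₘ S))
    (h₂ : IsMinZS ((g₁ + g₂) ::ₘ T)) (hsplit : ¬ IsMinZS (g₁ ::ₘ g₂ ::ₘ T)) :
    5 ∈ LSet (symmetrize (g₁ ::ₘ g₂ ::ₘ S + (g₁ + g₂) ::ₘ T)) := by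
  have hexchange : g₁ ::ₘ g₂ ::ₘ S + (g₁ + g₂) ::ₘ T = (g₁ + g₂) ::ₘ S + g₁ ::ₘ g₂ ::ₘ T := by
    simp only [← Multiset.singleton_add]
    abel
  have hthree : 1 + 2 ∈ LSet (g₁ ::ₘ g₂ ::ₘ S + (g₁ + g₂) ::ₘ T) := by
    rw [hexchange]
    exact add_mem_lSet_add h₁.add_cons.one_mem_lSet (two_mem_lSet_cons_cons h₂ hsplit)
  have hneg : 1 + 1 ∈ LSet ((g₁ ::ₘ g₂ ::ₘ S + (g₁ + g₂) ::ₘ T).map Neg.neg) := by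
    rw [Multiset.map_add]
    exact add_mem_lSet_add h₁.map_neg.one_mem_lSet h₂.map_neg.one_mem_lSet
  exact add_mem_lSet_add hthree hneg

theorem two_add_card_mem_lSet_symmetrize (h₁ : (0 : G) ∉ g₁ ::ₘ g₂ ::ₘ S)
    (h₂ : (0 : G) ∉ (g₁ + g₂) ::ₘ T) :
    2 + (S + T).card ∈ LSet (symmetrize (g₁ ::ₘ g₂ ::ₘ S + (g₁ + g₂) ::ₘ T)) := by
  simp only [Multiset.mem_cons, not_or] at h₁ h₂
  have htriple : IsMinZS {g₁, g₂, -(g₁ + g₂)} :=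
    isMinZS_triple_neg_add (Ne.symm h₁.1) (Ne.symm h₁.2.1) (Ne.symm h₂.1)
  have hsplit : symmetrize (g₁ ::ₘ g₂ ::ₘ S + (g₁ + g₂) ::ₘ T) =
      symmetrize {g₁, g₂, -(g₁ + g₂)} + symmetrize (S + T) := by
    simp only [symmetrize_apply, Multiset.insert_eq_cons, Multiset.map_add, Multiset.map_singleton,
      neg_neg, ← Multiset.singleton_add]
    abel
  rw [hsplit]
  refine add_mem_lSet_add htriple.two_mem_lSet_symmetrize (card_mem_lSet_symmetrize ?_)
  rw [Multiset.mem_add, not_or]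
  exact ⟨h₁.2.2, h₂.2⟩

theorem PropertyP.exists_four_five_mem_lSet_symmetrize [Finite G] (hP : PropertyP G) :
    ∃ F : Multiset G, (0 : G) ∉ F ∧ F.card = 2 * DavC G ∧ 4 ∈ LSet (symmetrize F) ∧
      5 ∈ LSet (symmetrize F) ∧ 2 * DavC G - 1 ∈ LSet (symmetrize F) := by
  have hD := hP.three_le_davC
  obtain ⟨g₁, g₂, U₁, U₂, hU₁, hU₂, hcard₁, hcard₂, hle, hmem⟩ := hP
  obtain ⟨S, rfl⟩ := Multiset.le_iff_exists_add.mp hle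
  obtain ⟨T, rfl⟩ := Multiset.exists_cons_of_mem hmem
  simp only [Multiset.insert_eq_cons, Multiset.cons_add, Multiset.singleton_add] at hU₁ hcard₁
  have h0₁ := hU₁.zero_notMem (by omega)
  have h0₂ := hU₂.zero_notMem (by omega)
  have hsplit : ¬ IsMinZS (g₁ ::ₘ g₂ ::ₘ T) := by
    intro hmin
    have hcard := hmin.card_le_davC
    rw [Multiset.card_cons] at hcard hcard₂
    rw [Multiset.card_cons] at hcard
    omega
  refine ⟨g₁ ::ₘ g₂ ::ₘ S + (g₁ + g₂) ::ₘ T, by rw [Multiset.mem_add, not_or]; exact ⟨h0₁, h0₂⟩,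
    by rw [Multiset.card_add, hcard₁, hcard₂, two_mul], four_mem_lSet_symmetrize_add hU₁ hU₂,
    five_mem_lSet_symmetrize_add hU₁ hU₂ hsplit, ?_⟩
  convert two_add_card_mem_lSet_symmetrize h0₁ h0₂ using 1
  simp only [Multiset.card_cons, Multiset.card_add] at hcard₁ hcard₂ ⊢
  omega

theorem PropertyP.exists_Icc_subset_lSet_symmetrize [Finite G] (hP : PropertyP G) :
    ∃ B : Multiset G, (0 : G) ∉ B ∧ B.card = 2 * DavC G * (2 * DavC G) ∧
      Set.Icc (2 * DavC G * 4) B.card ⊆ LSet (symmetrize B) := by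
  have hD := hP.three_le_davC
  obtain ⟨F, h0, hcard, h4, h5, hpred⟩ := hP.exists_four_five_mem_lSet_symmetrize
  have hsucc : 2 * DavC G - 1 + 1 = F.card := by omega
  have hIcc := Icc_subset_lSet_nsmul (k := 2 * DavC G) h4 h5 hpred
    (hsucc ▸ card_mem_lSet_symmetrize h0) (by omega) (by omega)
  refine ⟨(2 * DavC G) • F, mt Multiset.mem_of_mem_nsmul h0, by simp [hcard], ?_⟩
  rwa [map_nsmul, Multiset.card_nsmul, ← hsucc]

end PropertyP

theorem stmt12 {G : Type*} [AddCommGroup G] [Fintype G] (hcard : 3 ≤ Fintype.card G)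
    (hP : PropertyP G) :
    ∃ Astar : Multiset G, Astar.sum = 0 ∧
      ∀ A : Multiset G, A.sum = 0 → rhoSet (LSet A) = (DavC G : ℚ) / 2 →
        IsIntervalSet (LSet (Astar + A)) ∧
        rhoSet (LSet (Astar + A)) = (DavC G : ℚ) / 2 := by
  have hD := hP.three_le_davC
  obtain ⟨B, hB0, hBcard, hB⟩ := hP.exists_Icc_subset_lSet_symmetrize
  refine ⟨symmetrize B, sum_symmetrize B, fun A _ hρ => ?_⟩
  obtain ⟨E, rfl, hE0, m, hm, hEcard⟩ := exists_eq_symmetrize_of_rhoSet_eq hD hρ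
  have h0 : (0 : G) ∉ B + E := by
    rw [Multiset.mem_add, not_or]
    exact ⟨hB0, hE0⟩
  have hcardBE : 2 * (B + E).card = DavC G * (2 * DavC G * 4 + m) := by
    rw [Multiset.card_add, mul_add, hEcard, hBcard]
    ring
  have hgap : 2 * DavC G * 4 + 2 * DavC G ≤ B.card := by
    rw [hBcard]
    nlinarith
  have hL : LSet (symmetrize B + symmetrize E) = Set.Icc (2 * DavC G * 4 + m) (B + E).card := by
    refine Set.Subset.antisymm ?_ ?_
    · rw [← map_add]
      exact lSet_symmetrize_subset_Icc h0 (by omega) hcardBE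
    · rw [Multiset.card_add]
      exact Icc_subset_lSet_add_symmetrize hB hgap hE0 hm
  have hle : 2 * DavC G * 4 + m ≤ (B + E).card := by nlinarith
  rw [hL]
  refine ⟨isIntervalSet_Icc hle, ?_⟩
  rw [rhoSet_Icc hle, div_eq_div_iff (by norm_cast; omega) two_ne_zero, mul_comm]
  exact_mod_cast hcardBE
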